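/- arXiv:2506.18447 — 2 statements merged into one kernel-verified Lean document; each statement's English description precedes it below -/
import Mathlib

section
/- For every α > 0, taking values in the extended reals, sup{ (−Σ_{i=1}^N q_i log q_i) / (−Σ_{i=1}^N q_i log λ_i) : (q_1,…,q_N) is a probability vector with Σ_{i=1}^N q_i log p_i + α ≥ 0 } = inf_{q ∈ (0,∞)} P_α(q), with the conventions 0·log 0 = 0 and sup ∅ = −∞. Moreover, if inf_{q>0} P_α(q) is attained at some q* > 0, then the supremum is attained at the probability vector (q*_1,…,q*_N) with q*_i = λ_i^{P_α(q*)} (p_i e^α)^{q*}. -/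
/-!
Write `a i = log (p i) + α` and, for real `s`, `F s t = ∑ i, lam i ^ s * exp (t * a i)`, so that
`F (P t) t = 1` and `F s t ≥ 1` whenever `s ≤ P t`.

*Upper bound.*  Gibbs' inequality (`gibbs`) against the probability vector
`lam i ^ P t * exp (t * a i)` bounds the entropy of `q` by
`P t * (-∑ q i log lam i) - t * ∑ q i a i`, and the last term helps when `∑ q i a i ≥ 0`, `t > 0`.

*Lower bound.*  If a real `s` lies below every `P t`, then `F s ≥ 1` on `(0, ∞)`, and a feasible
vector with quotient at least `s` is produced (`exists_feasible`).  If some `a j > 0`, then `F s` is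
coercive, so it has a minimum over `[0, ∞)` at some `t₀`; the normalised weights
`lam i ^ s * exp (t₀ * a i)` work, the constraint `∑ q i a i ≥ 0` and complementary slackness
`t₀ * ∑ q i a i = 0` being the first-order conditions.  If all `a j ≤ 0`, the minimum is replaced by
the limit of `F s t` as `t → ∞`, which is the sum of `lam i ^ s` over `a i = 0`; the vector
proportional to `lam i ^ s` on that set works.

*Attainment.*  If `P` has a minimum over `(0, ∞)` at `t`, then `F (P t)` has one there too, so its
derivative vanishes, which says `∑ q* i * a i = 0`; the quotient is then computed directly.
-/

open MeasureTheory Filter Topology Set ENNReal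

noncomputable section

/-- The cylinder set in `{1,…,N}^ℕ` determined by a finite word `w` of length `m`. -/
def cylinder {N m : ℕ} (w : Fin m → Fin N) : Set (ℕ → Fin N) :=
  {x | ∀ j : Fin m, x (j : ℕ) = w j}

/-- The product `r_{w 0} ⋯ r_{w (m-1)}` of weights along a finite word `w`. -/
def wordProd {N : ℕ} (r : Fin N → ℝ) {m : ℕ} (w : Fin m → Fin N) : ℝ :=
  ∏ j, r (w j)

/-- The composition `f_{x 0} ∘ f_{x 1} ∘ ⋯ ∘ f_{x (n-1)}` of the maps along
the first `n` symbols of `x`; the coding map is `π x = lim_n prefixMap f x n 0`. -/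
def prefixMap {N : ℕ} {E : Type*} (f : Fin N → E → E) (x : ℕ → Fin N) : ℕ → E → E
  | 0 => id
  | n + 1 => fun y => f (x 0) (prefixMap f (fun k => x (k + 1)) n y)

/-- The symbolic limsup set `⋂ₖ ⋃_{n ≥ k} [(σⁿ ō)|_{ℓ(n)}]`; its image under the
coding map `π` is the dynamical covering set `R(ō, ℓ)`. -/
def limsupCylinders {N : ℕ} (ℓ : ℕ → ℕ) (o : ℕ → Fin N) : Set (ℕ → Fin N) :=
  ⋂ k, ⋃ n, ⋃ _ : k ≤ n, cylinder (fun j : Fin (ℓ n) => o (n + (j : ℕ)))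

/-- `m(n) = ⌊#{k ∈ ℕ : ℓ(k) = n}/n⌋`. -/
def countM (ℓ : ℕ → ℕ) (n : ℕ) : ℕ := Nat.card {k : ℕ | ℓ k = n} / n

/-- The probabilistic pressure
`L(s) = limsup_n (1/n) log Σ_{|ȷ|=n} λ_ȷ^s (1 − (1 − p_ȷ)^{m(n)})`. -/
def pressL {N : ℕ} (lam p : Fin N → ℝ) (m : ℕ → ℕ) (s : ℝ) : ℝ :=
  Filter.limsup (fun n : ℕ => Real.log (∑ w : Fin n → Fin N,
    wordProd lam w ^ s * (1 - (1 - wordProd p w) ^ m n)) / (n : ℝ)) atTop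

/-- Gibbs' inequality. -/
lemma gibbs {N : ℕ} (q w : Fin N → ℝ) (hq : ∀ i, 0 ≤ q i) (hw : ∀ i, 0 < w i)
    (hs : ∑ i, w i = ∑ i, q i) :
    -∑ i, q i * Real.log (q i) ≤ -∑ i, q i * Real.log (w i) := by
  have key : ∀ i, q i * Real.log (w i) - q i * Real.log (q i) ≤ w i - q i := by
    intro i
    rcases (hq i).eq_or_lt with h | h
    · rw [← h]; simp [(hw i).le]
    · have h1 := Real.log_le_sub_one_of_pos (div_pos (hw i) h)
      rw [Real.log_div (hw i).ne' h.ne'] at h1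
      have h2 := mul_le_mul_of_nonneg_left h1 h.le
      have h3 : q i * (w i / q i - 1) = w i - q i := by field_simp
      linarith
  have h := Finset.sum_le_sum (fun i (_ : i ∈ Finset.univ) => key i)
  rw [Finset.sum_sub_distrib, Finset.sum_sub_distrib, hs] at h
  linarith

lemma hasDerivAt_expSum {N : ℕ} (c a : Fin N → ℝ) (t : ℝ) :
    HasDerivAt (fun t => ∑ i, c i * Real.exp (t * a i))
      (∑ i, c i * Real.exp (t * a i) * a i) t := by
  refine HasDerivAt.fun_sum fun i _ => ?_
  have h := (((hasDerivAt_id t).mul_const (a i)).exp).const_mul (c i)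
  refine h.congr_deriv ?_
  simp [mul_assoc]

/-- First-order conditions for a minimum over `[0, ∞)`. -/
lemma first_order (f : ℝ → ℝ) (d t : ℝ) (hd : HasDerivAt f d t) (ht : 0 ≤ t)
    (hmin : ∀ u, 0 ≤ u → f t ≤ f u) : 0 ≤ d ∧ t * d = 0 := by
  have hslope : Tendsto (slope f t) (𝓝[>] t) (𝓝 d) :=
    (hasDerivAt_iff_tendsto_slope.mp hd).mono_left
      (nhdsWithin_mono _ fun x hx => ne_of_gt hx)
  refine ⟨ge_of_tendsto hslope ?_, ?_⟩
  · filter_upwards [self_mem_nhdsWithin] with u hu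
    have hu : t < u := hu
    rw [slope_def_field]
    exact div_nonneg (sub_nonneg.mpr (hmin u (ht.trans hu.le))) (sub_pos.mpr hu).le
  · rcases ht.eq_or_lt with h | h
    · rw [← h, zero_mul]
    · have hl : IsLocalMin f t := by
        filter_upwards [lt_mem_nhds h] with u hu using hmin u hu.le
      rw [hl.hasDerivAt_eq_zero hd, mul_zero]

/-- A sum of exponentials with some positive exponent is coercive on `[0, ∞)`. -/
lemma exists_min {N : ℕ} (c a : Fin N → ℝ) (hc : ∀ i, 0 < c i) (j : Fin N) (hj : 0 < a j) :
    ∃ t, 0 ≤ t ∧ ∀ u, 0 ≤ u →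
      ∑ i, c i * Real.exp (t * a i) ≤ ∑ i, c i * Real.exp (u * a i) := by
  set f : ℝ → ℝ := fun t => ∑ i, c i * Real.exp (t * a i) with hf
  have hcont : Continuous f := by fun_prop
  have htop : Tendsto f atTop atTop := by
    have h1 : Tendsto (fun u => c j * Real.exp (u * a j)) atTop atTop :=
      (Real.tendsto_exp_atTop.comp (tendsto_id.atTop_mul_const hj)).const_mul_atTop (hc j)
    refine tendsto_atTop_mono (fun u => ?_) h1
    exact Finset.single_le_sum (f := fun i => c i * Real.exp (u * a i))
      (fun i _ => (mul_pos (hc i) (Real.exp_pos _)).le) (Finset.mem_univ j)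
  obtain ⟨T, hT0, hT⟩ := ((eventually_ge_atTop (0 : ℝ)).and
    (htop.eventually_ge_atTop (f 0))).exists_forall_of_atTop |>.imp
      fun T h => And.intro (h T le_rfl).1 fun u hu => (h u hu).2
  obtain ⟨t, ht, hmin⟩ := isCompact_Icc.exists_isMinOn (nonempty_Icc.mpr hT0) hcont.continuousOn
  refine ⟨t, ht.1, fun u hu => ?_⟩
  rcases le_total u T with h | h
  · exact hmin ⟨hu, h⟩
  · exact (hmin ⟨le_rfl, hT0⟩ : f t ≤ f 0).trans (hT u h)

lemma lyapunov_pos {N : ℕ} (lam q : Fin N → ℝ) (hlam : ∀ i, lam i ∈ Set.Ioo (0 : ℝ) 1)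
    (hq : ∀ i, 0 ≤ q i) (hs : ∑ i, q i = 1) : 0 < -∑ i, q i * Real.log (lam i) := by
  have hneg : ∀ i, Real.log (lam i) < 0 := fun i => Real.log_neg (hlam i).1 (hlam i).2
  obtain ⟨i, -, hi⟩ : ∃ i ∈ Finset.univ, q i ≠ 0 := by
    apply Finset.exists_ne_zero_of_sum_ne_zero
    rw [hs]; exact one_ne_zero
  rw [← Finset.sum_neg_distrib]
  refine Finset.sum_pos' (fun i _ => ?_) ⟨i, Finset.mem_univ i, ?_⟩
  · exact neg_nonneg.mpr (mul_nonpos_of_nonneg_of_nonpos (hq i) (hneg i).le)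
  · exact neg_pos.mpr (mul_neg_of_pos_of_neg ((hq i).lt_of_ne' hi) (hneg i))

/-- A Gibbs-type vector, `q i = lam i ^ s * exp (t * a i - κ)` on its support, with `κ ≥ 0` and
complementary slackness `t * ∑ q i * a i = 0`, has entropy-over-Lyapunov quotient at least `s`. -/
lemma le_quotient {N : ℕ} (lam a q : Fin N → ℝ) (hlam : ∀ i, lam i ∈ Set.Ioo (0 : ℝ) 1)
    (hq : ∀ i, 0 ≤ q i) (hs : ∑ i, q i = 1) (s t κ : ℝ) (hκ : 0 ≤ κ)
    (hlog : ∀ i, q i ≠ 0 → Real.log (q i) = s * Real.log (lam i) + t * a i - κ)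
    (hslack : t * ∑ i, q i * a i = 0) :
    s ≤ (-∑ i, q i * Real.log (q i)) / (-∑ i, q i * Real.log (lam i)) := by
  rw [le_div_iff₀ (lyapunov_pos lam q hlam hq hs)]
  have h : ∑ i, q i * Real.log (q i)
      = s * ∑ i, q i * Real.log (lam i) + t * ∑ i, q i * a i - κ * ∑ i, q i := by
    rw [Finset.mul_sum, Finset.mul_sum, Finset.mul_sum, ← Finset.sum_add_distrib,
      ← Finset.sum_sub_distrib]
    refine Finset.sum_congr rfl fun i _ => ?_
    by_cases h0 : q i = 0
    · simp [h0]
    · rw [hlog i h0]; ring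
  rw [h, hslack, hs]
  linarith

/-- If `∑ i, lam i ^ s * exp (t * a i) ≥ 1` for all `t > 0`, some probability vector satisfies the
constraint `∑ q i * a i ≥ 0` and has entropy-over-Lyapunov quotient at least `s`. -/
lemma exists_feasible {N : ℕ} (lam a : Fin N → ℝ) (hlam : ∀ i, lam i ∈ Set.Ioo (0 : ℝ) 1) (s : ℝ)
    (hF : ∀ t, 0 < t → 1 ≤ ∑ i, lam i ^ s * Real.exp (t * a i)) :
    ∃ q : Fin N → ℝ, (∀ i, 0 ≤ q i) ∧ ∑ i, q i = 1 ∧ 0 ≤ ∑ i, q i * a i ∧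
      s ≤ (-∑ i, q i * Real.log (q i)) / (-∑ i, q i * Real.log (lam i)) := by
  have hc : ∀ i, 0 < lam i ^ s := fun i => Real.rpow_pos_of_pos (hlam i).1 s
  by_cases hpos : ∃ j, 0 < a j
  · obtain ⟨j, hj⟩ := hpos
    obtain ⟨t, ht0, hmin⟩ := exists_min (fun i => lam i ^ s) a hc j hj
    obtain ⟨hd, hslack⟩ := first_order _ _ t (hasDerivAt_expSum (fun i => lam i ^ s) a t) ht0 hmin
    set Z := ∑ i, lam i ^ s * Real.exp (t * a i) with hZ
    -- Only `t > 0` is covered by the hypothesis, so the value at `0` is reached by continuity.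
    have hZ1 : 1 ≤ Z := by
      have hcont : Continuous fun u => ∑ i, lam i ^ s * Real.exp (u * a i) := by fun_prop
      have hlim := (hcont.tendsto t).mono_left (nhdsWithin_le_nhds (s := Set.Ioi t))
      refine ge_of_tendsto hlim ?_
      filter_upwards [self_mem_nhdsWithin] with u hu using hF u (ht0.trans_lt hu)
    have hZ0 : 0 < Z := one_pos.trans_le hZ1
    have hsum : ∑ i, lam i ^ s * Real.exp (t * a i) / Z * a i
        = (∑ i, lam i ^ s * Real.exp (t * a i) * a i) / Z := by
      rw [Finset.sum_div]
      exact Finset.sum_congr rfl fun i _ => by ring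
    have hq : ∀ i, 0 ≤ lam i ^ s * Real.exp (t * a i) / Z := fun i =>
      (div_pos (mul_pos (hc i) (Real.exp_pos _)) hZ0).le
    have hq1 : ∑ i, lam i ^ s * Real.exp (t * a i) / Z = 1 := by
      rw [← Finset.sum_div, ← hZ, div_self hZ0.ne']
    refine ⟨fun i => lam i ^ s * Real.exp (t * a i) / Z, hq, hq1, ?_, ?_⟩
    · rw [hsum]; exact div_nonneg hd hZ0.le
    · refine le_quotient lam a _ hlam hq hq1 s t (Real.log Z) (Real.log_nonneg hZ1) ?_ ?_
      · intro i _
        rw [Real.log_div (mul_pos (hc i) (Real.exp_pos _)).ne' hZ0.ne',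
          Real.log_mul (hc i).ne' (Real.exp_pos _).ne', Real.log_exp, Real.log_rpow (hlam i).1]
      · rw [hsum, mul_div_assoc', hslack, zero_div]
  · push Not at hpos
    set c : Fin N → ℝ := fun i => if a i = 0 then lam i ^ s else 0 with hcdef
    set Z := ∑ i, c i with hZ
    have hlim : Tendsto (fun t => ∑ i, lam i ^ s * Real.exp (t * a i)) atTop (𝓝 Z) := by
      refine tendsto_finsetSum _ fun i _ => ?_
      by_cases h0 : a i = 0
      · simp [hcdef, h0]
      · have hneg : a i < 0 := (hpos i).lt_of_ne h0
        have h1 : Tendsto (fun t : ℝ => Real.exp (t * a i)) atTop (𝓝 0) :=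
          Real.tendsto_exp_atBot.comp (tendsto_id.atTop_mul_const_of_neg hneg)
        simpa [hcdef, h0] using h1.const_mul (lam i ^ s)
    have hZ1 : 1 ≤ Z := by
      refine ge_of_tendsto hlim ?_
      filter_upwards [eventually_gt_atTop 0] with t ht using hF t ht
    have hZ0 : 0 < Z := one_pos.trans_le hZ1
    have hq : ∀ i, 0 ≤ c i / Z := by
      intro i
      refine div_nonneg ?_ hZ0.le
      simp only [hcdef]
      split_ifs
      exacts [(hc i).le, le_rfl]
    have hq1 : ∑ i, c i / Z = 1 := by
      rw [← Finset.sum_div, ← hZ, div_self hZ0.ne']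
    have hqa : ∑ i, c i / Z * a i = 0 := by
      refine Finset.sum_eq_zero fun i _ => ?_
      by_cases h0 : a i = 0 <;> simp [hcdef, h0]
    refine ⟨fun i => c i / Z, hq, hq1, hqa.ge, ?_⟩
    refine le_quotient lam a _ hlam hq hq1 s 0 (Real.log Z) (Real.log_nonneg hZ1) ?_ (zero_mul _)
    intro i hi
    have h0 : a i = 0 := by
      by_contra h0
      exact hi (by simp [hcdef, h0])
    have hci : c i = lam i ^ s := by simp [hcdef, h0]
    simp only [hci]
    rw [Real.log_div (hc i).ne' hZ0.ne', Real.log_rpow (hlam i).1]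
    ring

/-- Variational principle: the entropy-over-Lyapunov supremum over probability
vectors with `Σ q_i log p_i + α ≥ 0` equals `inf_(q>0) P_α(q)` (in extended reals),
and the supremum is attained at `q*_i = λ_i^(P_α(q*)) (p_i e^α)^(q*)` whenever the
infimum is attained at some `q* > 0`. -/
theorem variational_principle_pos {N : ℕ} [NeZero N] (hN : 2 ≤ N)
    (lam p : Fin N → ℝ)
    (hlam : ∀ i, lam i ∈ Set.Ioo (0 : ℝ) 1)
    (hp : ∀ i, 0 < p i) (hpsum : ∑ i, p i = 1)
    (α : ℝ) (hα : 0 < α)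
    (P : ℝ → ℝ)
    (hP : ∀ q : ℝ, ∑ i, lam i ^ P q * (p i * Real.exp α) ^ q = 1) :
    sSup {r : EReal | ∃ q : Fin N → ℝ, (∀ i, 0 ≤ q i) ∧ ∑ i, q i = 1 ∧
        0 ≤ ∑ i, q i * Real.log (p i) + α ∧
        r = ((((-∑ i, q i * Real.log (q i)) /
            (-∑ i, q i * Real.log (lam i))) : ℝ) : EReal)}
      = (⨅ t : Set.Ioi (0 : ℝ), ((P t.1 : ℝ) : EReal)) ∧
    ∀ t : ℝ, 0 < t → (∀ u : ℝ, 0 < u → P t ≤ P u) →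
      (∀ i, 0 ≤ lam i ^ P t * (p i * Real.exp α) ^ t) ∧
      ∑ i, lam i ^ P t * (p i * Real.exp α) ^ t = 1 ∧
      0 ≤ ∑ i, lam i ^ P t * (p i * Real.exp α) ^ t * Real.log (p i) + α ∧
      (-∑ i, lam i ^ P t * (p i * Real.exp α) ^ t *
          Real.log (lam i ^ P t * (p i * Real.exp α) ^ t)) /
        (-∑ i, lam i ^ P t * (p i * Real.exp α) ^ t * Real.log (lam i)) = P t := by
  set a : Fin N → ℝ := fun i => Real.log (p i) + α with ha
  have hpow : ∀ (i : Fin N) (t : ℝ), (p i * Real.exp α) ^ t = Real.exp (t * a i) := by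
    intro i t
    rw [Real.rpow_def_of_pos (mul_pos (hp i) (Real.exp_pos α)),
      Real.log_mul (hp i).ne' (Real.exp_pos α).ne', Real.log_exp, mul_comm]
  have hconstr : ∀ q : Fin N → ℝ, ∑ i, q i = 1 →
      ∑ i, q i * Real.log (p i) + α = ∑ i, q i * a i := by
    intro q hq
    simp only [ha, mul_add, Finset.sum_add_distrib, ← Finset.sum_mul, hq, one_mul]
  simp only [hpow] at hP ⊢
  have hw : ∀ (s t : ℝ) (i : Fin N), 0 < lam i ^ s * Real.exp (t * a i) := fun s t i =>
    mul_pos (Real.rpow_pos_of_pos (hlam i).1 s) (Real.exp_pos _)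
  have hlogw : ∀ (s t : ℝ) (i : Fin N), Real.log (lam i ^ s * Real.exp (t * a i))
      = s * Real.log (lam i) + t * a i := by
    intro s t i
    rw [Real.log_mul (Real.rpow_pos_of_pos (hlam i).1 s).ne' (Real.exp_pos _).ne', Real.log_exp,
      Real.log_rpow (hlam i).1]
  have hF : ∀ s t : ℝ, s ≤ P t → 1 ≤ ∑ i, lam i ^ s * Real.exp (t * a i) := by
    intro s t hst
    rw [← hP t]
    refine Finset.sum_le_sum fun i _ => mul_le_mul_of_nonneg_right ?_ (Real.exp_pos _).le
    exact Real.rpow_le_rpow_of_exponent_ge (hlam i).1 (hlam i).2.le hst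
  have hsplit : ∀ (q : Fin N → ℝ) (s t : ℝ),
      ∑ i, q i * Real.log (lam i ^ s * Real.exp (t * a i))
        = s * ∑ i, q i * Real.log (lam i) + t * ∑ i, q i * a i := by
    intro q s t
    simp only [hlogw, Finset.mul_sum, ← Finset.sum_add_distrib]
    exact Finset.sum_congr rfl fun i _ => by ring
  refine ⟨le_antisymm ?_ ?_, ?_⟩
  · refine sSup_le ?_
    rintro r ⟨q, hq, hq1, hqa, rfl⟩
    refine le_iInf fun t => ?_
    obtain ⟨t, ht⟩ := t
    have ht : 0 < t := ht
    rw [EReal.coe_le_coe_iff, div_le_iff₀ (lyapunov_pos lam q hlam hq hq1)]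
    have hg := gibbs q (fun i => lam i ^ P t * Real.exp (t * a i)) hq (hw (P t) t)
      ((hP t).trans hq1.symm)
    rw [hsplit] at hg
    rw [hconstr q hq1] at hqa
    have := mul_nonneg ht.le hqa
    linarith
  · by_contra hlt
    obtain ⟨s, hs1, hs2⟩ := EReal.lt_iff_exists_real_btwn.mp (not_le.mp hlt)
    obtain ⟨q, hq, hq1, hqa, hqs⟩ := exists_feasible lam a hlam s fun t ht =>
      hF s t (EReal.coe_le_coe_iff.mp
        (hs2.le.trans (iInf_le (fun t : Set.Ioi (0 : ℝ) => ((P t.1 : ℝ) : EReal)) ⟨t, ht⟩)))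
    refine hs1.not_ge ((EReal.coe_le_coe_iff.mpr hqs).trans (le_sSup ?_))
    exact ⟨q, hq, hq1, by rwa [hconstr q hq1], rfl⟩
  · intro t ht hmin
    have hzero : ∑ i, lam i ^ P t * Real.exp (t * a i) * a i = 0 := by
      have hl : IsLocalMin (fun u => ∑ i, lam i ^ P t * Real.exp (u * a i)) t := by
        filter_upwards [lt_mem_nhds ht] with u hu
        rw [hP t]
        exact hF _ _ (hmin u hu)
      exact hl.hasDerivAt_eq_zero (hasDerivAt_expSum _ a t)
    have hq : ∀ i, 0 ≤ lam i ^ P t * Real.exp (t * a i) := fun i => (hw (P t) t i).le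
    refine ⟨hq, hP t, ?_, ?_⟩
    · rw [hconstr _ (hP t), hzero]
    · rw [hsplit, hzero, div_eq_iff (lyapunov_pos lam _ hlam hq (hP t)).ne']
      ring
end
end

section
/- Let Φ = {f_1,…,f_N} be an iterated function system of contracting similarities on ℝ^d with ratios λ_1,…,λ_N (no separation condition assumed), let p be a probability vector with all p_i > 0, let α > 0, and let ℓ : ℕ → ℕ be monotone increasing with liminf_{n→∞} ℓ(n)/log n = 1/α. Then for ℙ_p-almost every ō ∈ Σ, dim_H R(ō,ℓ) ≤ s(α), where s(α) is the unique nonnegative zero of the probabilistic pressure L. -/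
/-!
The limsup set is covered, for every `n₀`, by the cylinders `[w]` of the words `w` of length
`n ≥ n₀` that are read in `o` at some position `k` with `ℓ k = n` (this uses `ℓ k → ∞`, which
follows from the positive liminf of `ℓ(n)/log n`). The image of `[w]` under the coding map has
diameter at most `diam Λ · λ_w`, so for `t > s(α)` it suffices that `Σ_n Σ_w λ_w^t`, summed over
the words that occur, is almost surely finite: the tails then show that the `t`-dimensional
Hausdorff measure of the covering set is `0` (`hausdorffMeasure_eq_zero`).

The sum is finite because its expectation is. The positions `k` with `ℓ k = n` form an interval;
split it into `n` residue classes mod `n`. Each class has at most `m(n) + 1` members, and the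
occurrences of `w` along one class are independent since the blocks read are disjoint, so `w` occurs
with probability at most `n (1 − (1 − p_w)^{m(n)+1})` (`measure_occursAt_le`). Once `m(n) ≥ 1`
this is at most `2n (1 − (1 − p_w)^{m(n)})`, and the expectation is controlled by the sums defining
the pressure at `t`. These decay exponentially, because passing from `s(α)` to `t` gains a factor
`(max λ)^{n (t − s(α))}` while the growth rate at `s(α)` is `0` (`exists_pressSum_le_exp`).

That `m(n) ≥ 1` eventually comes from the uniqueness of the zero: since `log 0 = 0`, having
`m(n) = 0` infinitely often would make the pressure vanish at every large `s`
(`eventually_countM_ne_zero`).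
-/

open MeasureTheory Filter Topology Set ENNReal

noncomputable section

/-! ### The product structure of the measure -/

/-- A measure giving every cylinder `[w]` the mass `p_w` is the product of its one-letter
marginals. -/
theorem exists_eq_infinitePi {N : ℕ} {p : Fin N → ℝ} (hp : ∀ i, 0 < p i)
    {μ : Measure (ℕ → Fin N)} [IsProbabilityMeasure μ]
    (hμ : ∀ (m : ℕ) (w : Fin m → Fin N),
      μ (_root_.cylinder w) = ENNReal.ofReal (wordProd p w)) :
    ∃ (ν : Measure (Fin N)) (_ : IsProbabilityMeasure ν),
      (∀ i, ν {i} = ENNReal.ofReal (p i)) ∧ μ = Measure.infinitePi (fun _ : ℕ => ν) := by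
  have hm0 : Measurable (fun x : ℕ → Fin N => x 0) := measurable_pi_apply 0
  have hprob : IsProbabilityMeasure (μ.map (fun x => x 0)) :=
    Measure.isProbabilityMeasure_map hm0.aemeasurable
  have hsing : ∀ i, (μ.map (fun x => x 0)) {i} = ENNReal.ofReal (p i) := by
    intro i
    have h := hμ 1 (fun _ => i)
    rw [Measure.map_apply hm0 (measurableSet_singleton i)]
    have h2 : ((fun x : ℕ → Fin N => x 0) ⁻¹' {i}) = _root_.cylinder (fun _ : Fin 1 => i) := by
      ext x; simp [_root_.cylinder]
    rw [h2, h]; simp [wordProd]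
  refine ⟨μ.map (fun x => x 0), hprob, hsing, ?_⟩
  set ν := μ.map (fun x => x 0) with hν
  have hfin : ∀ m : ℕ, μ.map (fun x (j : Fin m) => x (j : ℕ)) = Measure.pi (fun _ => ν) := by
    intro m
    refine Measure.ext_of_singleton fun w => ?_
    rw [Measure.map_apply (by fun_prop) (measurableSet_singleton w), Measure.pi_singleton]
    have h2 : ((fun (x : ℕ → Fin N) (j : Fin m) => x (j : ℕ)) ⁻¹' {w}) = _root_.cylinder w := by
      ext x; simp [_root_.cylinder, funext_iff]
    rw [h2, hμ, wordProd, ENNReal.ofReal_prod_of_nonneg fun i _ => (hp _).le]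
    exact Finset.prod_congr rfl fun j _ => (hsing _).symm
  refine Measure.eq_infinitePi _ fun s t ht => ?_
  classical
  obtain ⟨m, hm⟩ : ∃ m, s ⊆ Finset.range m := s.exists_nat_subset_range
  -- Pad the box with full factors so that it constrains exactly the first `m` coordinates.
  let t' : ℕ → Set (Fin N) := fun i => if i ∈ s then t i else Set.univ
  have h1 : Set.pi s t = (fun (x : ℕ → Fin N) (j : Fin m) => x (j : ℕ)) ⁻¹'
      (Set.univ.pi fun j : Fin m => t' j) := by
    ext x
    simp only [Set.mem_pi, Set.mem_preimage, t']
    constructor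
    · intro h j _
      split_ifs with hj
      · exact h _ hj
      · trivial
    · intro h i hi
      have := h ⟨i, Finset.mem_range.1 (hm hi)⟩ trivial
      simpa [Finset.mem_coe.1 hi] using this
  rw [h1, ← Measure.map_apply (by fun_prop) (MeasurableSet.of_discrete), hfin, Measure.pi_pi,
    Fin.prod_univ_eq_prod_range (fun j => ν (t' j)) m]
  rw [← Finset.prod_subset hm]
  · exact Finset.prod_congr rfl fun i hi => by simp [t', hi]
  · intro i _ hi
    simp [t', hi]

/-- Occurrences of a word at positions `a, a + n, …, a + (r-1) n` are independent, so the
probability that none of them takes place is `(1 - p_w) ^ r`. -/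
theorem measure_no_occurrence {N : ℕ} {p : Fin N → ℝ} (hp : ∀ i, 0 < p i)
    {μ : Measure (ℕ → Fin N)} [IsProbabilityMeasure μ]
    (hμ : ∀ (m : ℕ) (w : Fin m → Fin N),
      μ (_root_.cylinder w) = ENNReal.ofReal (wordProd p w))
    {n : ℕ} (w : Fin n → Fin N) (a r : ℕ) :
    μ {x | ∀ q < r, ¬ ∀ j : Fin n, x (a + q * n + j) = w j} =
      (1 - ENNReal.ofReal (wordProd p w)) ^ r := by
  obtain ⟨ν, hprob, hsing, hmu⟩ := exists_eq_infinitePi hp hμ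
  have hg : Function.Injective (fun c : ℕ × Fin n => a + c.1 * n + (c.2 : ℕ)) := by
    rintro ⟨q, j⟩ ⟨q', j'⟩ h
    have h' : q * n + (j : ℕ) = q' * n + j' := by simp only at h; omega
    have hn : 0 < n := j.pos
    have hq : q = q' := by
      have := congrArg (· / n) h'
      simpa [Nat.div_eq_of_lt j.2, Nat.div_eq_of_lt j'.2, hn,
        Nat.mul_add_div, mul_comm _ n] using this
    subst hq
    have : j = j' := Fin.ext (by omega)
    rw [this]
  -- Reading `x` block by block turns the product measure into a product of block laws.
  have h1 := Measure.map_infinitePi_infinitePi_of_inj (P := fun _ : ℕ => ν) hg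
  have h2 := Measure.infinitePi_map_curry (fun (_ : ℕ) (_ : Fin n) => ν)
  rw [← h1, ← hmu, Measure.map_map (by fun_prop) (by fun_prop)] at h2
  have hset : {x : ℕ → Fin N | ∀ q < r, ¬ ∀ j : Fin n, x (a + q * n + j) = w j} =
      ((MeasurableEquiv.curry ℕ (Fin n) (Fin N)) ∘
        fun x (c : ℕ × Fin n) => x (a + c.1 * n + (c.2 : ℕ))) ⁻¹'
        (Set.pi (Finset.range r) fun _ => {w}ᶜ) := by
    ext x
    simp [funext_iff]
  rw [hset, ← Measure.map_apply (by fun_prop)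
    (MeasurableSet.pi (Finset.countable_toSet _) fun _ _ => MeasurableSet.of_discrete), h2,
    Measure.infinitePi_pi _ (fun _ _ => MeasurableSet.of_discrete), Finset.prod_const,
    Finset.card_range, prob_compl_eq_one_sub MeasurableSet.of_discrete,
    Measure.infinitePi_singleton, wordProd, ENNReal.ofReal_prod_of_nonneg fun i _ => (hp _).le]
  simp [hsing]

/-! ### Products along words -/

theorem wordProd_pos {N : ℕ} {r : Fin N → ℝ} (hr : ∀ i, 0 < r i) {m : ℕ}
    (w : Fin m → Fin N) : 0 < wordProd r w :=
  Finset.prod_pos fun _ _ => hr _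

theorem wordProd_le_one {N : ℕ} {r : Fin N → ℝ} (hr : ∀ i, 0 < r i) (hr1 : ∀ i, r i ≤ 1)
    {m : ℕ} (w : Fin m → Fin N) : wordProd r w ≤ 1 :=
  Finset.prod_le_one (fun _ _ => (hr _).le) fun _ _ => hr1 _

theorem wordProd_le_pow {N : ℕ} {r : Fin N → ℝ} (hr : ∀ i, 0 < r i) {c : ℝ}
    (hc : ∀ i, r i ≤ c) {m : ℕ} (w : Fin m → Fin N) : wordProd r w ≤ c ^ m := by
  have := Finset.prod_le_prod (s := Finset.univ) (f := fun j => r (w j)) (g := fun _ => c)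
    (fun _ _ => (hr _).le) fun _ _ => hc _
  simpa [wordProd] using this

/-! ### Probability that a word occurs -/

/-- The event that the word `w` of length `n` is read in `o` at some position `k` with
`ℓ k = n`. -/
def occursAt {N : ℕ} (ℓ : ℕ → ℕ) {n : ℕ} (w : Fin n → Fin N) : Set (ℕ → Fin N) :=
  {o | ∃ k, ℓ k = n ∧ ∀ j : Fin n, o (k + j) = w j}

theorem measurableSet_occursAt {N : ℕ} (ℓ : ℕ → ℕ) {n : ℕ} (w : Fin n → Fin N) :
    MeasurableSet (occursAt ℓ w) := by
  have : occursAt ℓ w = ⋃ k, ⋃ _ : ℓ k = n, ⋂ j : Fin n,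
      (fun o : ℕ → Fin N => o (k + j)) ⁻¹' {w j} := by
    ext o; simp [occursAt]
  rw [this]
  exact MeasurableSet.iUnion fun k => MeasurableSet.iUnion fun _ => MeasurableSet.iInter fun j =>
    measurable_pi_apply _ (measurableSet_singleton _)

/-- The probability that `w` occurs is at most `n (1 − (1 − p_w)^{m(n)+1})`.
Splitting the positions `k` with `ℓ k = n` into residue classes mod `n`, each class has at
most `m(n) + 1` members, and occurrences along one class are independent. -/
theorem measure_occursAt_le {N : ℕ} {p : Fin N → ℝ} (hp : ∀ i, 0 < p i) (hp1 : ∀ i, p i ≤ 1)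
    {μ : Measure (ℕ → Fin N)} [IsProbabilityMeasure μ]
    (hμ : ∀ (m : ℕ) (w : Fin m → Fin N),
      μ (_root_.cylinder w) = ENNReal.ofReal (wordProd p w))
    {ℓ : ℕ → ℕ} (hℓmono : Monotone ℓ) {n : ℕ} (hn : 0 < n) (hfin : {k | ℓ k = n}.Finite)
    (w : Fin n → Fin N) :
    μ.real (occursAt ℓ w) ≤ n * (1 - (1 - wordProd p w) ^ (countM ℓ n + 1)) := by
  set P := wordProd p w with hP
  have hP0 : 0 ≤ P := (wordProd_pos hp w).le
  have hP1 : P ≤ 1 := wordProd_le_one hp hp1 w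
  set r := countM ℓ n + 1 with hr
  let B : ℕ → Set (ℕ → Fin N) := fun a => {x | ∀ q < r, ¬ ∀ j : Fin n, x (a + q * n + j) = w j}
  have hBm : ∀ a, MeasurableSet (B a) := by
    intro a
    have : B a = ⋂ q, ⋂ _ : q < r, (⋂ j : Fin n,
      (fun o : ℕ → Fin N => o (a + q * n + j)) ⁻¹' {w j})ᶜ := by
      ext o; simp [B]
    rw [this]
    exact MeasurableSet.iInter fun k => MeasurableSet.iInter fun _ =>
      (MeasurableSet.iInter fun j =>
        measurable_pi_apply _ (measurableSet_singleton _)).compl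
  have hB : ∀ a, μ.real (B a)ᶜ = 1 - (1 - P) ^ r := by
    intro a
    rw [probReal_compl_eq_one_sub (hBm a), measureReal_def, measure_no_occurrence hp hμ w a r,
      ENNReal.toReal_pow, ENNReal.toReal_sub_of_le (by simpa using hP1) (by simp),
      ENNReal.toReal_ofReal hP0]
    simp
  rcases Set.eq_empty_or_nonempty {k | ℓ k = n} with hK | hK
  · have : occursAt ℓ w = ∅ := by
      ext o
      simp only [occursAt, Set.mem_ofPred_eq, Set.mem_empty_iff_false, iff_false]
      rintro ⟨k, hk, _⟩
      exact (Set.ext_iff.1 hK k).1 hk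
    rw [this, measureReal_empty]
    have : (1 - P) ^ r ≤ 1 := pow_le_one₀ (by linarith) (by linarith)
    have h2 : (0 : ℝ) ≤ 1 - (1 - P) ^ r := by linarith
    positivity
  · set a := sInf {k | ℓ k = n} with ha
    have haK : ℓ a = n := Nat.sInf_mem hK
    have hsub : occursAt ℓ w ⊆ ⋃ i ∈ Finset.range n, (B (a + i))ᶜ := by
      rintro o ⟨k, hk, ho⟩
      have hak : a ≤ k := Nat.sInf_le hk
      have hcard : k - a + 1 ≤ Nat.card {k | ℓ k = n} := by
        have hs : Set.Icc a k ⊆ {k | ℓ k = n} := fun i hi =>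
          le_antisymm (by rw [← hk]; exact hℓmono hi.2) (by rw [← haK]; exact hℓmono hi.1)
        have := Nat.card_mono hfin hs
        simp only [Nat.card_eq_fintype_card, Fintype.card_ofFinset, Nat.card_Icc] at this
        omega
      have hq : (k - a) / n < r := by
        rw [hr, Nat.lt_succ_iff, countM]
        exact Nat.div_le_div_right (by omega)
      have hdm := Nat.mod_add_div (k - a) n
      simp only [Set.mem_iUnion, Finset.mem_range]
      refine ⟨(k - a) % n, Nat.mod_lt _ hn, fun hB' => hB' ((k - a) / n) hq fun j => ?_⟩
      rw [← ho j]
      congr 1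
      rw [mul_comm _ n]
      omega
    calc μ.real (occursAt ℓ w) ≤ μ.real (⋃ i ∈ Finset.range n, (B (a + i))ᶜ) :=
          measureReal_mono hsub (measure_ne_top _ _)
      _ ≤ ∑ i ∈ Finset.range n, μ.real (B (a + i))ᶜ := measureReal_biUnion_finset_le _ _
      _ = _ := by simp [hB, mul_sub]

theorem one_sub_pow_succ_le {q : ℝ} (h0 : 0 ≤ q) (h1 : q ≤ 1) {m : ℕ} (hm : m ≠ 0) :
    1 - q ^ (m + 1) ≤ 2 * (1 - q ^ m) := by
  have h2 : q ^ m ≤ q := pow_le_of_le_one h0 h1 hm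
  have h3 : q ^ m ≤ 1 := pow_le_one₀ h0 h1
  rw [pow_succ]
  nlinarith [mul_nonneg (sub_nonneg.2 h3) (sub_nonneg.2 h1)]

/-! ### The pressure -/

/-- The sum `Σ_{|w| = n} λ_w^s (1 − (1 − p_w)^{m(n)})` whose exponential growth rate is the
pressure. -/
def pressSum {N : ℕ} (lam p : Fin N → ℝ) (m : ℕ → ℕ) (s : ℝ) (n : ℕ) : ℝ :=
  ∑ w : Fin n → Fin N, wordProd lam w ^ s * (1 - (1 - wordProd p w) ^ m n)

section Pressure

variable {N : ℕ} {lam p : Fin N → ℝ} {m : ℕ → ℕ}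

/-- `1 − (1 − p_w)^k` is the probability of at least one success in `k` independent trials of
probability `p_w`. -/
theorem hit_nonneg (hp : ∀ i, 0 < p i) (hp1 : ∀ i, p i ≤ 1) {n : ℕ} (w : Fin n → Fin N) (k : ℕ) :
    0 ≤ 1 - (1 - wordProd p w) ^ k := by
  have := pow_le_one₀ (n := k) (sub_nonneg.2 (wordProd_le_one hp hp1 w))
    (sub_le_self _ (wordProd_pos hp w).le)
  linarith

theorem hit_le_one (hp : ∀ i, 0 < p i) (hp1 : ∀ i, p i ≤ 1) {n : ℕ} (w : Fin n → Fin N) (k : ℕ) :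
    1 - (1 - wordProd p w) ^ k ≤ 1 := by
  have := pow_nonneg (sub_nonneg.2 (wordProd_le_one hp hp1 w)) k
  linarith

theorem pressSum_nonneg (hlam : ∀ i, lam i ∈ Set.Ioo (0 : ℝ) 1) (hp : ∀ i, 0 < p i)
    (hp1 : ∀ i, p i ≤ 1) (s : ℝ) (n : ℕ) : 0 ≤ pressSum lam p m s n :=
  Finset.sum_nonneg fun w _ => mul_nonneg
    (Real.rpow_nonneg (wordProd_pos (fun i => (hlam i).1) w).le _) (hit_nonneg hp hp1 w _)

theorem pressSum_le_pow (hlam : ∀ i, lam i ∈ Set.Ioo (0 : ℝ) 1) (hp : ∀ i, 0 < p i)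
    (hp1 : ∀ i, p i ≤ 1) (s : ℝ) (n : ℕ) :
    pressSum lam p m s n ≤ (∑ i, lam i ^ s) ^ n := by
  have h : ∀ w : Fin n → Fin N, wordProd lam w ^ s = ∏ j, lam (w j) ^ s := fun w =>
    (Real.finsetProd_rpow _ _ (fun j _ => (hlam _).1.le) s).symm
  calc pressSum lam p m s n ≤ ∑ w : Fin n → Fin N, ∏ j, lam (w j) ^ s := by
        refine Finset.sum_le_sum fun w _ => ?_
        rw [← h w]
        exact mul_le_of_le_one_right
          (Real.rpow_nonneg (wordProd_pos (fun i => (hlam i).1) w).le _) (hit_le_one hp hp1 w _)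
    _ = _ := by
        rw [Fintype.sum_pow]

theorem log_pressSum_div_le (hlam : ∀ i, lam i ∈ Set.Ioo (0 : ℝ) 1) (hp : ∀ i, 0 < p i)
    (hp1 : ∀ i, p i ≤ 1) (s : ℝ) (n : ℕ) {c : ℝ} (hc : 0 ≤ c) (hs : Real.log (∑ i, lam i ^ s) ≤ c) :
    Real.log (pressSum lam p m s n) / n ≤ c := by
  rcases (pressSum_nonneg (m := m) hlam hp hp1 s n).eq_or_lt with h | h
  · rw [← h]; simpa using hc
  rcases Nat.eq_zero_or_pos n with rfl | hn
  · simpa using hc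
  rw [div_le_iff₀ (by positivity)]
  calc _ ≤ Real.log ((∑ i, lam i ^ s) ^ n) := Real.log_le_log h (pressSum_le_pow hlam hp hp1 s n)
    _ = n * Real.log (∑ i, lam i ^ s) := Real.log_pow _ _
    _ ≤ n * c := by gcongr
    _ = _ := mul_comm _ _

theorem pressL_eq (s : ℝ) : pressL lam p m s =
    Filter.limsup (fun n : ℕ => Real.log (pressSum lam p m s n) / (n : ℝ)) atTop := rfl

/-- If `m(n) = 0` infinitely often then infinitely many terms of the sequence defining `L(s)` are
`log 0 / n = 0`, so `L` vanishes at every large `s` and its zero is not unique. -/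
theorem eventually_countM_ne_zero (hlam : ∀ i, lam i ∈ Set.Ioo (0 : ℝ) 1) (hp : ∀ i, 0 < p i)
    (hp1 : ∀ i, p i ≤ 1) {sα : ℝ} (huniq : ∀ s : ℝ, 0 ≤ s → pressL lam p m s = 0 → s = sα) :
    ∀ᶠ n in atTop, m n ≠ 0 := by
  by_contra hcon
  have hfreq : ∃ᶠ n in atTop, m n = 0 := by
    simpa [Filter.Frequently] using hcon
  have hlim : Tendsto (fun s : ℝ => ∑ i, lam i ^ s) atTop (𝓝 0) := by
    have := tendsto_finsetSum (Finset.univ : Finset (Fin N)) fun i _ =>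
      tendsto_rpow_atTop_of_base_lt_one (lam i) (by linarith [(hlam i).1]) (hlam i).2
    simpa using this
  have hz : ∀ᶠ s : ℝ in atTop, s = sα := by
    filter_upwards [hlim.eventually_le_const one_pos, eventually_ge_atTop 0] with s hs hs0
    refine huniq s hs0 ?_
    have hle : ∀ n : ℕ, Real.log (pressSum lam p m s n) / (n : ℝ) ≤ 0 := fun n =>
      log_pressSum_div_le hlam hp hp1 s n le_rfl (Real.log_nonpos
        (Finset.sum_nonneg fun i _ => Real.rpow_nonneg (hlam i).1.le _) hs)
    have hge : ∃ᶠ n : ℕ in atTop, 0 ≤ Real.log (pressSum lam p m s n) / (n : ℝ) :=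
      hfreq.mono fun n hn => by simp [pressSum, hn]
    rw [pressL_eq]
    refine le_antisymm ?_ ?_
    · exact limsup_le_of_le (IsCoboundedUnder.of_frequently_ge hge) (.of_forall hle)
    · exact le_limsup_of_frequently_le hge ⟨0, by simpa only [eventually_map] using Eventually.of_forall hle⟩
  obtain ⟨s, hs, hgt⟩ := (hz.and (eventually_gt_atTop sα)).exists
  exact absurd hs (ne_of_gt hgt)

/-- Beyond a zero of the pressure, the sums decay exponentially. -/
theorem exists_pressSum_le_exp [NeZero N] (hlam : ∀ i, lam i ∈ Set.Ioo (0 : ℝ) 1)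
    (hp : ∀ i, 0 < p i)
    (hp1 : ∀ i, p i ≤ 1) {s t : ℝ} (hst : s < t) (hz : pressL lam p m s = 0) :
    ∃ ε > 0, ∀ᶠ n : ℕ in atTop, pressSum lam p m t n ≤ Real.exp (-ε) ^ n := by
  obtain ⟨i₀, hi₀⟩ := Finite.exists_max lam
  set c := lam i₀ with hc
  have hc0 : 0 < c := (hlam i₀).1
  have hc1 : c < 1 := (hlam i₀).2
  have hlog : Real.log c < 0 := Real.log_neg hc0 hc1
  set ε := -((t - s) * Real.log c) / 2 with hε
  have hε0 : 0 < ε := by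
    have := mul_pos (sub_pos.2 hst) (neg_pos.2 hlog)
    rw [hε]; linarith
  refine ⟨ε, hε0, ?_⟩
  have hev : ∀ᶠ n : ℕ in atTop, Real.log (pressSum lam p m s n) / (n : ℝ) < ε := by
    refine eventually_lt_of_limsup_lt (by rw [← pressL_eq, hz]; exact hε0) ?_
    refine ⟨max 0 (Real.log (∑ i, lam i ^ s)), ?_⟩
    simp only [eventually_map]
    exact .of_forall fun n =>
      log_pressSum_div_le hlam hp hp1 s n (le_max_left _ _) (le_max_right _ _)
  filter_upwards [hev, eventually_gt_atTop 0] with n hn hn0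
  have hn0' : (0 : ℝ) < n := by exact_mod_cast hn0
  have hS : pressSum lam p m s n ≤ Real.exp (ε * n) := by
    rcases (pressSum_nonneg (m := m) hlam hp hp1 s n).eq_or_lt with h | h
    · rw [← h]; positivity
    · rw [← Real.log_le_iff_le_exp h]
      exact ((div_lt_iff₀ hn0').1 hn).le
  have hstep : pressSum lam p m t n ≤ (c ^ n) ^ (t - s) * pressSum lam p m s n := by
    rw [pressSum, pressSum, Finset.mul_sum]
    refine Finset.sum_le_sum fun w _ => ?_
    have hw := wordProd_pos (fun i => (hlam i).1) w
    rw [← mul_assoc]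
    refine mul_le_mul_of_nonneg_right ?_ (hit_nonneg hp hp1 w _)
    have : wordProd lam w ^ t = wordProd lam w ^ (t - s) * wordProd lam w ^ s := by
      rw [← Real.rpow_add hw]; ring_nf
    rw [this]
    gcongr
    exact wordProd_le_pow (fun i => (hlam i).1) hi₀ w
  have hcn : (c ^ n) ^ (t - s) = Real.exp (-(2 * ε) * n) := by
    rw [Real.rpow_def_of_pos (pow_pos hc0 n), Real.log_pow, hε]
    congr 1; ring
  calc _ ≤ _ := hstep
    _ ≤ Real.exp (-(2 * ε) * n) * Real.exp (ε * n) := by rw [hcn]; gcongr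
    _ = Real.exp (-ε) ^ n := by rw [← Real.exp_add, ← Real.exp_nat_mul]; ring_nf

end Pressure

/-! ### The coding map and diameters of cylinders -/

section Coding

variable {N d : ℕ} {lam : Fin N → ℝ}
  {f : Fin N → EuclideanSpace ℝ (Fin d) → EuclideanSpace ℝ (Fin d)}

theorem dist_prefixMap (hf : ∀ i x y, dist (f i x) (f i y) = lam i * dist x y)
    (n : ℕ) (x : ℕ → Fin N) (y z : EuclideanSpace ℝ (Fin d)) :
    dist (prefixMap f x n y) (prefixMap f x n z) =
      wordProd lam (fun j : Fin n => x j) * dist y z := by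
  induction n generalizing x with
  | zero => simp [prefixMap, wordProd]
  | succ n ih =>
    simp only [prefixMap, hf, ih, wordProd, Fin.prod_univ_succ, Fin.val_zero, Fin.val_succ]
    ring

theorem prefixMap_congr {x y : ℕ → Fin N} {n : ℕ} (h : ∀ j < n, x j = y j)
    (z : EuclideanSpace ℝ (Fin d)) : prefixMap f x n z = prefixMap f y n z := by
  induction n generalizing x y with
  | zero => rfl
  | succ n ih =>
    simp only [prefixMap]
    rw [h 0 (Nat.succ_pos n), ih fun j hj => h (j + 1) (by omega)]

variable {Λ : Set (EuclideanSpace ℝ (Fin d))}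
  {π : (ℕ → Fin N) → EuclideanSpace ℝ (Fin d)}

theorem prefixMap_mem (hΛ : Λ = ⋃ i, f i '' Λ) {z : EuclideanSpace ℝ (Fin d)} (hz : z ∈ Λ)
    (n : ℕ) (x : ℕ → Fin N) : prefixMap f x n z ∈ Λ := by
  induction n generalizing x with
  | zero => exact hz
  | succ n ih =>
    rw [hΛ]
    exact Set.mem_iUnion.2 ⟨x 0, Set.mem_image_of_mem _ (ih _)⟩

/-- The coding map takes values in `Λ`: the compositions along `x` contract, so the base point `0`
may be replaced by a point of `Λ`. -/
theorem coding_mem [NeZero N] (hlam : ∀ i, lam i ∈ Set.Ioo (0 : ℝ) 1)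
    (hf : ∀ i x y, dist (f i x) (f i y) = lam i * dist x y)
    (hΛne : Λ.Nonempty) (hΛc : IsCompact Λ) (hΛ : Λ = ⋃ i, f i '' Λ)
    (hπ : ∀ x, Filter.Tendsto (fun n => prefixMap f x n 0) Filter.atTop (nhds (π x)))
    (x : ℕ → Fin N) : π x ∈ Λ := by
  obtain ⟨z, hz⟩ := hΛne
  obtain ⟨i₀, hi₀⟩ := Finite.exists_max lam
  have hd : Tendsto (fun n => dist (prefixMap f x n 0) (prefixMap f x n z)) atTop (𝓝 0) := by
    have h0 : Tendsto (fun n : ℕ => lam i₀ ^ n * dist 0 z) atTop (𝓝 0) := by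
      simpa using (tendsto_pow_atTop_nhds_zero_of_lt_one (hlam i₀).1.le (hlam i₀).2).mul_const
        (dist 0 z)
    refine squeeze_zero (fun _ => dist_nonneg) (fun n => ?_) h0
    rw [dist_prefixMap hf]
    exact mul_le_mul_of_nonneg_right (wordProd_le_pow (fun i => (hlam i).1) hi₀ _) dist_nonneg
  exact hΛc.isClosed.mem_of_tendsto ((tendsto_iff_of_dist hd).1 (hπ x))
    (.of_forall fun n => prefixMap_mem hΛ hz n x)

/-- Self-similarity of the coding map: `π x = f_{x 0} ∘ ⋯ ∘ f_{x (n-1)} (π (σⁿ x))`. -/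
theorem coding_shift (hf : ∀ i x y, dist (f i x) (f i y) = lam i * dist x y)
    (hlam : ∀ i, lam i ∈ Set.Ioo (0 : ℝ) 1)
    (hπ : ∀ x, Filter.Tendsto (fun n => prefixMap f x n 0) Filter.atTop (nhds (π x)))
    (n : ℕ) (x : ℕ → Fin N) : π x = prefixMap f x n (π fun k => x (k + n)) := by
  have hcont : ∀ i, Continuous (f i) := fun i =>
    (LipschitzWith.of_dist_le_mul (K := ⟨lam i, (hlam i).1.le⟩) fun x y => (hf i x y).le).continuous
  induction n generalizing x with
  | zero => rfl
  | succ n ih =>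
    have h1 : π x = f (x 0) (π fun k => x (k + 1)) :=
      tendsto_nhds_unique ((tendsto_add_atTop_iff_nat 1).2 (hπ x))
        (((hcont (x 0)).tendsto _).comp (hπ fun k => x (k + 1)))
    rw [h1, ih]
    simp only [prefixMap]
    rfl

theorem ediam_coding_cylinder_le [NeZero N] (hlam : ∀ i, lam i ∈ Set.Ioo (0 : ℝ) 1)
    (hf : ∀ i x y, dist (f i x) (f i y) = lam i * dist x y)
    (hΛne : Λ.Nonempty) (hΛc : IsCompact Λ) (hΛ : Λ = ⋃ i, f i '' Λ)
    (hπ : ∀ x, Filter.Tendsto (fun n => prefixMap f x n 0) Filter.atTop (nhds (π x)))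
    {n : ℕ} (w : Fin n → Fin N) :
    Metric.ediam (π '' _root_.cylinder w) ≤ ENNReal.ofReal (Metric.diam Λ * wordProd lam w) := by
  refine Metric.ediam_le ?_
  rintro _ ⟨x, hx, rfl⟩ _ ⟨y, hy, rfl⟩
  rw [edist_dist]
  refine ENNReal.ofReal_le_ofReal ?_
  have hw : (fun j : Fin n => x j) = w := funext hx
  have hxy : ∀ j < n, y j = x j := fun j hj => (hy ⟨j, hj⟩).trans (hx ⟨j, hj⟩).symm
  rw [coding_shift hf hlam hπ n x, coding_shift hf hlam hπ n y, prefixMap_congr hxy,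
    dist_prefixMap hf, hw, mul_comm]
  refine mul_le_mul_of_nonneg_right ?_ (wordProd_pos (fun i => (hlam i).1) w).le
  exact Metric.dist_le_diam_of_mem hΛc.isBounded (coding_mem hlam hf hΛne hΛc hΛ hπ _)
    (coding_mem hlam hf hΛne hΛc hΛ hπ _)

end Coding

/-! ### The almost sure covering estimate -/

/-- A bounded `ℓ` would make `ℓ n / log n` tend to `0`. -/
theorem tendsto_length_atTop {α : ℝ} (hα : 0 < α) {ℓ : ℕ → ℕ} (hℓmono : Monotone ℓ)
    (hℓ : Filter.liminf (fun n : ℕ => (ℓ n : ℝ) / Real.log n) Filter.atTop = 1 / α) :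
    Tendsto ℓ atTop atTop := by
  refine tendsto_atTop_atTop_of_monotone' hℓmono fun hbdd => ?_
  obtain ⟨b, hb⟩ := hbdd
  have hlim : Tendsto (fun n : ℕ => (ℓ n : ℝ) / Real.log n) atTop (𝓝 0) := by
    have hlog : Tendsto (fun n : ℕ => Real.log n) atTop atTop :=
      Real.tendsto_log_atTop.comp tendsto_natCast_atTop_atTop
    refine squeeze_zero' (.of_forall fun n =>
      div_nonneg (Nat.cast_nonneg _) (Real.log_natCast_nonneg n)) (.of_forall fun n => ?_)
      (hlog.const_div_atTop (b : ℝ))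
    have : ℓ n ≤ b := hb ⟨n, rfl⟩
    have := Real.log_natCast_nonneg n
    gcongr
  rw [hlim.liminf_eq] at hℓ
  exact (one_div_pos.2 hα).ne hℓ

/-- The random weighted count `Σ λ_w^t` over the words `w` of length `n` read at some position
`k` with `ℓ k = n`. -/
def hitSum {N : ℕ} (lam : Fin N → ℝ) (ℓ : ℕ → ℕ) (t : ℝ) (n : ℕ) (o : ℕ → Fin N) : ℝ≥0∞ :=
  ∑ w : Fin n → Fin N, (occursAt ℓ w).indicator (fun _ => ENNReal.ofReal (wordProd lam w ^ t)) o

theorem measurable_hitSum {N : ℕ} (lam : Fin N → ℝ) (ℓ : ℕ → ℕ) (t : ℝ) (n : ℕ) :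
    Measurable (hitSum lam ℓ t n) := by
  unfold hitSum
  exact Finset.measurable_fun_sum _ fun w _ => measurable_const.indicator (measurableSet_occursAt ℓ w)

/-- For `t` beyond a zero of the pressure, the expectation of `hitSum n` is eventually at most
`2 n` times the `n`-th pressure sum, which decays exponentially; so the total weight has finite
expectation and is almost surely finite. -/
theorem ae_tsum_hitSum_ne_top {N : ℕ} [NeZero N] {lam p : Fin N → ℝ}
    (hlam : ∀ i, lam i ∈ Set.Ioo (0 : ℝ) 1) (hp : ∀ i, 0 < p i) (hp1 : ∀ i, p i ≤ 1)
    {μ : Measure (ℕ → Fin N)} [IsProbabilityMeasure μ]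
    (hμ : ∀ (m : ℕ) (w : Fin m → Fin N),
      μ (_root_.cylinder w) = ENNReal.ofReal (wordProd p w))
    {ℓ : ℕ → ℕ} (hℓmono : Monotone ℓ) (hℓ : Tendsto ℓ atTop atTop) {s t : ℝ} (hst : s < t)
    (hz : pressL lam p (countM ℓ) s = 0) (hm : ∀ᶠ n in atTop, countM ℓ n ≠ 0) :
    ∀ᵐ o ∂μ, ∑' n, hitSum lam ℓ t n o ≠ ∞ := by
  have hfin : ∀ n, {k | ℓ k = n}.Finite := by
    intro n
    have h := hℓ.eventually_gt_atTop n
    obtain ⟨k₀, hk₀⟩ := eventually_atTop.1 h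
    refine (Set.finite_lt_nat k₀).subset fun k hk => ?_
    by_contra hcon
    exact (hk₀ k (not_lt.1 hcon)).ne' hk
  have hpow : ∀ {n : ℕ} (w : Fin n → Fin N), 0 ≤ wordProd lam w ^ t := fun w =>
    Real.rpow_nonneg (wordProd_pos (fun i => (hlam i).1) w).le _
  let a : ℕ → ℝ := fun n => ∑ w : Fin n → Fin N, wordProd lam w ^ t * μ.real (occursAt ℓ w)
  have ha0 : ∀ n, 0 ≤ a n := fun n => Finset.sum_nonneg fun w _ =>
    mul_nonneg (hpow w) measureReal_nonneg
  have hint : ∀ n, ∫⁻ o, hitSum lam ℓ t n o ∂μ = ENNReal.ofReal (a n) := by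
    intro n
    unfold hitSum
    rw [lintegral_finsetSum _ fun w _ => measurable_const.indicator (measurableSet_occursAt ℓ w),
      ENNReal.ofReal_sum_of_nonneg fun w _ => mul_nonneg (hpow w) measureReal_nonneg]
    refine Finset.sum_congr rfl fun w _ => ?_
    rw [lintegral_indicator_const (measurableSet_occursAt ℓ w), ENNReal.ofReal_mul (hpow w),
      ofReal_measureReal]
  obtain ⟨ε, hε, hS⟩ := exists_pressSum_le_exp (m := countM ℓ) hlam hp hp1 hst hz
  have hsum : Summable a := by
    have hnorm : ‖Real.exp (-ε)‖ < 1 := by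
      rw [Real.norm_eq_abs, abs_of_pos (Real.exp_pos _)]
      simpa using hε
    have hgeo : Summable fun n : ℕ => 2 * ((n : ℝ) ^ 1 * Real.exp (-ε) ^ n) :=
      (summable_pow_mul_geometric_of_norm_lt_one 1 hnorm).mul_left 2
    refine Summable.of_norm_bounded_eventually_nat hgeo ?_
    filter_upwards [hS, hm, eventually_gt_atTop 0] with n hSn hmn hn
    rw [Real.norm_eq_abs, abs_of_nonneg (ha0 n)]
    calc a n ≤ ∑ w : Fin n → Fin N, wordProd lam w ^ t *
          (n * (2 * (1 - (1 - wordProd p w) ^ countM ℓ n))) := by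
          refine Finset.sum_le_sum fun w _ => mul_le_mul_of_nonneg_left ?_ (hpow w)
          refine (measure_occursAt_le hp hp1 hμ hℓmono hn (hfin n) w).trans ?_
          refine mul_le_mul_of_nonneg_left ?_ (Nat.cast_nonneg n)
          exact one_sub_pow_succ_le (sub_nonneg.2 (wordProd_le_one hp hp1 w))
            (sub_le_self _ (wordProd_pos hp w).le) hmn
      _ = 2 * (n * pressSum lam p (countM ℓ) t n) := by
          rw [pressSum, Finset.mul_sum, Finset.mul_sum]
          exact Finset.sum_congr rfl fun w _ => by ring
      _ ≤ 2 * ((n : ℝ) ^ 1 * Real.exp (-ε) ^ n) := by rw [pow_one]; gcongr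
  have htot : ∫⁻ o, ∑' n, hitSum lam ℓ t n o ∂μ ≠ ∞ := by
    rw [lintegral_tsum fun n => (measurable_hitSum lam ℓ t n).aemeasurable]
    simp_rw [hint]
    exact hsum.tsum_ofReal_ne_top
  filter_upwards [ae_lt_top (Measurable.tsum fun n => measurable_hitSum lam ℓ t n) htot]
    with o ho using ho.ne

/-- The cylinders of the words read in `o` at positions `k` with `ℓ k ≥ n₀` cover the limsup set;
the tail of a convergent `∑ hitSum` bounds their `t`-dimensional sum. -/
theorem hausdorffMeasure_eq_zero {N d : ℕ} [NeZero N] {lam : Fin N → ℝ}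
    (hlam : ∀ i, lam i ∈ Set.Ioo (0 : ℝ) 1)
    {f : Fin N → EuclideanSpace ℝ (Fin d) → EuclideanSpace ℝ (Fin d)}
    (hf : ∀ i x y, dist (f i x) (f i y) = lam i * dist x y)
    {Λ : Set (EuclideanSpace ℝ (Fin d))}
    (hΛne : Λ.Nonempty) (hΛc : IsCompact Λ) (hΛ : Λ = ⋃ i, f i '' Λ)
    {π : (ℕ → Fin N) → EuclideanSpace ℝ (Fin d)}
    (hπ : ∀ x, Filter.Tendsto (fun n => prefixMap f x n 0) Filter.atTop (nhds (π x)))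
    {ℓ : ℕ → ℕ} (hℓ : Tendsto ℓ atTop atTop) {t : ℝ} (ht : 0 < t) {o : ℕ → Fin N}
    (ho : ∑' n, hitSum lam ℓ t n o ≠ ∞) :
    Measure.hausdorffMeasure t (π '' limsupCylinders ℓ o) = 0 := by
  classical
  obtain ⟨i₀, hi₀⟩ := Finite.exists_max lam
  set c := lam i₀ with hc
  have hc0 : 0 < c := (hlam i₀).1
  have hc1 : c < 1 := (hlam i₀).2
  set D := Metric.diam Λ with hD
  have hD0 : 0 ≤ D := Metric.diam_nonneg
  let U : ∀ n₀ : ℕ, (Σ n : ℕ, (Fin (n + n₀) → Fin N)) → Set (EuclideanSpace ℝ (Fin d)) :=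
    fun n₀ v => if o ∈ occursAt ℓ v.2 then π '' _root_.cylinder v.2 else ∅
  have hdiam : ∀ n₀ v, Metric.ediam (U n₀ v) ≤
      (occursAt ℓ v.2).indicator (fun _ => ENNReal.ofReal (D * wordProd lam v.2)) o := by
    intro n₀ v
    by_cases hv : o ∈ occursAt ℓ v.2
    · simpa [U, hv] using ediam_coding_cylinder_le hlam hf hΛne hΛc hΛ hπ v.2
    · simp [U, hv]
  have hr : Tendsto (fun n₀ : ℕ => ENNReal.ofReal (D * c ^ n₀)) atTop (𝓝 0) := by
    have : Tendsto (fun n₀ : ℕ => D * c ^ n₀) atTop (𝓝 0) := by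
      simpa using (tendsto_pow_atTop_nhds_zero_of_lt_one hc0.le hc1).const_mul D
    simpa using ENNReal.tendsto_ofReal this
  have key := Measure.hausdorffMeasure_le_liminf_tsum t (π '' limsupCylinders ℓ o) _ hr U
    (.of_forall fun n₀ v => by
      refine (hdiam n₀ v).trans ((Set.indicator_le_self _ _ _).trans
        (ENNReal.ofReal_le_ofReal (mul_le_mul_of_nonneg_left ?_ hD0)))
      exact (wordProd_le_pow (fun i => (hlam i).1) hi₀ v.2).trans
        (pow_le_pow_of_le_one hc0.le hc1.le (by omega)))
    (.of_forall fun n₀ => by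
      rintro _ ⟨x, hx, rfl⟩
      obtain ⟨k₀, hk₀⟩ := eventually_atTop.1 (hℓ.eventually_ge_atTop n₀)
      obtain ⟨k, hk, hxk⟩ : ∃ k, ∃ _ : k₀ ≤ k,
          x ∈ _root_.cylinder (fun j : Fin (ℓ k) => o (k + (j : ℕ))) := by
        simpa only [Set.mem_iUnion] using Set.mem_iInter.1 hx k₀
      obtain ⟨n, hn⟩ : ∃ n, ℓ k = n + n₀ := ⟨ℓ k - n₀, by have := hk₀ k hk; omega⟩
      refine Set.mem_iUnion.2 ⟨⟨n, fun j => o (k + j)⟩, ?_⟩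
      have hocc : o ∈ occursAt ℓ (fun j : Fin (n + n₀) => o (k + j)) := ⟨k, hn, fun _ => rfl⟩
      simp only [U, hocc, if_true]
      exact ⟨x, fun j => hxk ⟨j, hn.symm ▸ j.isLt⟩, rfl⟩)
  have hsum : ∀ n₀, ∑' v, Metric.ediam (U n₀ v) ^ t ≤
      ENNReal.ofReal (D ^ t) * ∑' n, hitSum lam ℓ t (n + n₀) o := by
    intro n₀
    rw [ENNReal.tsum_sigma', ← ENNReal.tsum_mul_left]
    refine ENNReal.tsum_le_tsum fun n => ?_
    rw [tsum_fintype, hitSum, Finset.mul_sum]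
    refine Finset.sum_le_sum fun w _ => ?_
    have hw := (wordProd_pos (fun i => (hlam i).1) w).le
    refine (ENNReal.rpow_le_rpow (hdiam n₀ ⟨n, w⟩) ht.le).trans ?_
    by_cases hv : o ∈ occursAt ℓ w
    · simp only [Set.indicator_of_mem hv]
      rw [ENNReal.ofReal_rpow_of_nonneg (mul_nonneg hD0 hw) ht.le, Real.mul_rpow hD0 hw,
        ENNReal.ofReal_mul (Real.rpow_nonneg hD0 _)]
    · simp [Set.indicator_of_notMem hv, ht]
  have hlim : Tendsto (fun n₀ => ENNReal.ofReal (D ^ t) * ∑' n, hitSum lam ℓ t (n + n₀) o)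
      atTop (𝓝 0) := by
    simpa using ENNReal.Tendsto.const_mul
      (ENNReal.tendsto_sum_nat_add (fun n => hitSum lam ℓ t n o) ho) (.inr ENNReal.ofReal_ne_top)
  have hlim' := tendsto_of_tendsto_of_tendsto_of_le_of_le tendsto_const_nhds hlim
    (fun _ => zero_le) hsum
  rw [hlim'.liminf_eq] at key
  exact le_antisymm key zero_le

/-! ### The upper bound -/

/-- Upper bound: `dim_H R(ō,ℓ) ≤ s(α)` for `ℙ_p`-a.e. `ō`, where `s(α)` is the
unique nonnegative zero of the probabilistic pressure `L`. No separation condition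
is assumed. -/
theorem dimH_coverSet_le {N d : ℕ} [NeZero N] (hN : 2 ≤ N)
    (lam p : Fin N → ℝ)
    (hlam : ∀ i, lam i ∈ Set.Ioo (0 : ℝ) 1)
    (hp : ∀ i, 0 < p i) (hpsum : ∑ i, p i = 1)
    (f : Fin N → EuclideanSpace ℝ (Fin d) → EuclideanSpace ℝ (Fin d))
    (hf : ∀ i x y, dist (f i x) (f i y) = lam i * dist x y)
    (Λ : Set (EuclideanSpace ℝ (Fin d)))
    (hΛne : Λ.Nonempty) (hΛc : IsCompact Λ) (hΛ : Λ = ⋃ i, f i '' Λ)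
    (π : (ℕ → Fin N) → EuclideanSpace ℝ (Fin d))
    (hπ : ∀ x, Filter.Tendsto (fun n => prefixMap f x n 0) Filter.atTop (nhds (π x)))
    (μ : Measure (ℕ → Fin N)) [IsProbabilityMeasure μ]
    (hμ : ∀ (m : ℕ) (w : Fin m → Fin N), μ (cylinder w) = ENNReal.ofReal (wordProd p w))
    (α : ℝ) (hα : 0 < α)
    (ℓ : ℕ → ℕ) (hℓmono : Monotone ℓ)
    (hℓ : Filter.liminf (fun n : ℕ => (ℓ n : ℝ) / Real.log n) Filter.atTop = 1 / α)
    (sα : ℝ) (hsα0 : 0 ≤ sα) (hsαz : pressL lam p (countM ℓ) sα = 0)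
    (hsαuniq : ∀ s : ℝ, 0 ≤ s → pressL lam p (countM ℓ) s = 0 → s = sα) :
    ∀ᵐ o ∂μ, dimH (π '' limsupCylinders ℓ o) ≤ ENNReal.ofReal sα := by
  have hp1 : ∀ i, p i ≤ 1 := fun i =>
    hpsum ▸ Finset.single_le_sum (fun j _ => (hp j).le) (Finset.mem_univ i)
  have hℓtop := tendsto_length_atTop hα hℓmono hℓ
  have hm := eventually_countM_ne_zero hlam hp hp1 hsαuniq
  have hae : ∀ᵐ o ∂μ, ∀ k : ℕ, ∑' n, hitSum lam ℓ (sα + 1 / ((k : ℝ) + 1)) n o ≠ ∞ :=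
    ae_all_iff.2 fun k => ae_tsum_hitSum_ne_top hlam hp hp1 hμ hℓmono hℓtop
      (lt_add_of_pos_right _ Nat.one_div_pos_of_nat) hsαz hm
  filter_upwards [hae] with o ho
  have hle : ∀ k : ℕ, dimH (π '' limsupCylinders ℓ o) ≤
      ENNReal.ofReal (sα + 1 / ((k : ℝ) + 1)) := by
    intro k
    have hpos : 0 < sα + 1 / ((k : ℝ) + 1) := add_pos_of_nonneg_of_pos hsα0 Nat.one_div_pos_of_nat
    refine dimH_le_of_hausdorffMeasure_ne_top (d := (sα + 1 / ((k : ℝ) + 1)).toNNReal) ?_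
    rw [Real.coe_toNNReal _ hpos.le,
      hausdorffMeasure_eq_zero hlam hf hΛne hΛc hΛ hπ hℓtop hpos (ho k)]
    exact ENNReal.zero_ne_top
  have hlim : Tendsto (fun k : ℕ => ENNReal.ofReal (sα + 1 / ((k : ℝ) + 1))) atTop
      (𝓝 (ENNReal.ofReal sα)) := by
    refine ENNReal.tendsto_ofReal ?_
    simpa using tendsto_one_div_add_atTop_nhds_zero_nat.const_add sα
  exact ge_of_tendsto' hlim hle
end
end
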